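/- The crawl value function V is strictly monotonically increasing on [0, ∞). -/

import Mathlib

open Real Finset

/-- Normalized residual of the `i`-th Taylor approximation of the exponential:
`R_i(x) = (exp x − ∑_{j=0}^{i} x^j/j!) / exp x`. -/
noncomputable def Rres (i : ℕ) (x : ℝ) : ℝ :=
  (Real.exp x - ∑ j ∈ Finset.range (i + 1), x ^ j / (Nat.factorial j : ℝ)) / Real.exp x

/-- Expected crawl-interval length `ψ(ι) = ∑_{i=0}^{⌊ι/β⌋} (1/γ)·R_i(γ(ι − iβ))`. -/
noncomputable def psi (γ β : ℝ) (ι : ℝ) : ℝ :=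
  ∑ i ∈ Finset.range (⌊ι / β⌋₊ + 1), (1 / γ) * Rres i (γ * (ι - (i : ℝ) * β))

/-- Expected cumulative freshness `w(ι) = ∑_{i=0}^{⌊ι/β⌋} (ν^i/(Δ+ν)^{i+1})·R_i((α+γ)(ι − iβ))`. -/
noncomputable def wfun (α β γ ν Δ : ℝ) (ι : ℝ) : ℝ :=
  ∑ i ∈ Finset.range (⌊ι / β⌋₊ + 1),
    (ν ^ i / (Δ + ν) ^ (i + 1)) * Rres i ((α + γ) * (ι - (i : ℝ) * β))

/-- Crawl value function `V(ι) = μ̃·(w(ι) − exp(−αι)·ψ(ι))`. -/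
noncomputable def Vfun (μ α β γ ν Δ : ℝ) (ι : ℝ) : ℝ :=
  μ * (wfun α β γ ν Δ ι - Real.exp (-(α * ι)) * psi γ β ι)

lemma Rres_zero (i : ℕ) : Rres i 0 = 0 := by
  unfold Rres
  rw [Finset.sum_range_succ']
  simp

lemma Rres_succ (i : ℕ) (x : ℝ) :
    Rres (i + 1) x = Rres i x - x ^ (i + 1) / (Nat.factorial (i + 1) : ℝ) * Real.exp (-x) := by
  unfold Rres
  rw [Finset.sum_range_succ _ (i + 1), Real.exp_neg]
  have := Real.exp_pos x
  field_simp
  ring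

lemma Rres_hasDerivAt (i : ℕ) (x : ℝ) :
    HasDerivAt (Rres i) (x ^ i / (Nat.factorial i : ℝ) * Real.exp (-x)) x := by
  have he : HasDerivAt (fun x : ℝ => Real.exp (-x)) (Real.exp (-x) * (-1)) x :=
    (hasDerivAt_id x).neg.exp
  induction i with
  | zero =>
    have h : Rres 0 = fun x => 1 - Real.exp (-x) := by
      funext y
      have := Real.exp_pos y
      simp only [Rres, Real.exp_neg]
      field_simp
      simp
    rw [h]
    refine (he.const_sub 1).congr_deriv ?_
    simp
  | succ i ih =>
    have h : Rres (i + 1) = fun x =>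
        Rres i x - x ^ (i + 1) / (Nat.factorial (i + 1) : ℝ) * Real.exp (-x) :=
      funext (Rres_succ i)
    rw [h]
    have hp := ((hasDerivAt_pow (i + 1) x).div_const (Nat.factorial (i + 1) : ℝ)).mul he
    refine (ih.sub hp).congr_deriv ?_
    have h1 : (Nat.factorial i : ℝ) ≠ 0 := by positivity
    have h2 : (i : ℝ) + 1 ≠ 0 := by positivity
    rw [Nat.factorial_succ]
    push_cast
    field_simp
    ring

lemma Rres_pos (i : ℕ) {x : ℝ} (hx : 0 < x) : 0 < Rres i x := by
  have h : StrictMonoOn (Rres i) (Set.Ici 0) := by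
    apply strictMonoOn_of_deriv_pos (convex_Ici 0)
    · exact fun y _ => (Rres_hasDerivAt i y).continuousAt.continuousWithinAt
    · intro y hy
      rw [interior_Ici] at hy
      have hy : 0 < y := hy
      rw [(Rres_hasDerivAt i y).deriv]
      positivity
  have := h (Set.mem_Ici.2 le_rfl) (Set.mem_Ici.2 hx.le) hx
  rwa [Rres_zero] at this

/-- The `i`-th summand of `V / μ`. -/
noncomputable def gterm (α β γ ν Δ : ℝ) (i : ℕ) (x : ℝ) : ℝ :=
  (ν ^ i / (Δ + ν) ^ (i + 1)) * Rres i ((α + γ) * (x - (i : ℝ) * β))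
    - Real.exp (-(α * x)) * ((1 / γ) * Rres i (γ * (x - (i : ℝ) * β)))

lemma gterm_hasDerivAt (α β γ ν Δ : ℝ) (hα : 0 < α) (hγ : 0 < γ)
    (hrates : α + γ = Δ + ν) (hnu : ν = γ * Real.exp (-(α * β))) (i : ℕ) (x : ℝ) :
    HasDerivAt (gterm α β γ ν Δ i)
      (α * Real.exp (-(α * x)) * ((1 / γ) * Rres i (γ * (x - (i : ℝ) * β)))) x := by
  have hl (c : ℝ) : HasDerivAt (fun x : ℝ => c * (x - (i : ℝ) * β)) (c * 1) x :=
    ((hasDerivAt_id x).sub_const _).const_mul c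
  have hR (c : ℝ) := (Rres_hasDerivAt i (c * (x - (i : ℝ) * β))).comp x (hl c)
  have he : HasDerivAt (fun x : ℝ => Real.exp (-(α * x))) (Real.exp (-(α * x)) * (-(α * 1))) x :=
    ((hasDerivAt_id x).const_mul α).neg.exp
  have h := ((hR (α + γ)).const_mul (ν ^ i / (Δ + ν) ^ (i + 1))).sub
    (he.mul ((hR γ).const_mul (1 / γ)))
  refine h.congr_deriv ?_
  have key : ν ^ i * Real.exp (-((α + γ) * (x - (i : ℝ) * β)))
      = γ ^ i * (Real.exp (-(α * x)) * Real.exp (-(γ * (x - (i : ℝ) * β)))) := by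
    rw [hnu, mul_pow, ← Real.exp_nat_mul, mul_assoc, ← Real.exp_add, ← Real.exp_add]
    congr 2
    ring
  have hs : 0 < α + γ := by positivity
  have h1 : (Nat.factorial i : ℝ) ≠ 0 := by positivity
  have e1 : ν ^ i / (Δ + ν) ^ (i + 1) * (((α + γ) * (x - (i : ℝ) * β)) ^ i / (Nat.factorial i : ℝ)
      * Real.exp (-((α + γ) * (x - (i : ℝ) * β))) * ((α + γ) * 1))
      = (x - (i : ℝ) * β) ^ i / (Nat.factorial i : ℝ) *
        (ν ^ i * Real.exp (-((α + γ) * (x - (i : ℝ) * β)))) := by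
    rw [← hrates, mul_pow, pow_succ]
    generalize Real.exp (-((α + γ) * (x - (i : ℝ) * β))) = E
    generalize (x - (i : ℝ) * β) ^ i = F
    field_simp
  rw [e1, key, mul_pow]
  simp only [Function.comp]
  generalize Rres i (γ * (x - (i : ℝ) * β)) = r
  generalize Real.exp (-(γ * (x - (i : ℝ) * β))) = E
  generalize (x - (i : ℝ) * β) ^ i = F
  field_simp
  ring

lemma gterm_strictMonoOn (α β γ ν Δ : ℝ) (hα : 0 < α) (hγ : 0 < γ)
    (hrates : α + γ = Δ + ν) (hnu : ν = γ * Real.exp (-(α * β))) (i : ℕ) :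
    StrictMonoOn (gterm α β γ ν Δ i) (Set.Ici ((i : ℝ) * β)) := by
  have hd := gterm_hasDerivAt α β γ ν Δ hα hγ hrates hnu i
  apply strictMonoOn_of_deriv_pos (convex_Ici _)
  · exact fun y _ => (hd y).continuousAt.continuousWithinAt
  · intro y hy
    rw [interior_Ici] at hy
    have hy : (i : ℝ) * β < y := hy
    rw [(hd y).deriv]
    have := Rres_pos i (mul_pos hγ (sub_pos.2 hy))
    positivity

lemma Vfun_eq (μ α β γ ν Δ x : ℝ) : Vfun μ α β γ ν Δ x =
    μ * ∑ i ∈ Finset.range (⌊x / β⌋₊ + 1), gterm α β γ ν Δ i x := by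
  simp only [Vfun, wfun, psi, gterm, Finset.sum_sub_distrib, Finset.mul_sum]

/-- The crawl value function `V` is strictly monotonically increasing on `[0, ∞)`. -/
theorem stmt_10 (μ α β γ ν Δ : ℝ) (hμ : 0 < μ) (hα : 0 < α) (hβ : 0 < β) (hγ : 0 < γ)
    (hν : 0 < ν) (hΔ : 0 < Δ) (hrates : α + γ = Δ + ν) (hnu : ν = γ * Real.exp (-(α * β))) :
    StrictMonoOn (Vfun μ α β γ ν Δ) (Set.Ici (0 : ℝ)) := by
  intro a ha b hb hab
  have ha : 0 ≤ a := ha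
  have hb : 0 ≤ b := hb
  have hm := gterm_strictMonoOn α β γ ν Δ hα hγ hrates hnu
  have hle {x : ℝ} (hx : 0 ≤ x) {i : ℕ} (hi : i ∈ Finset.range (⌊x / β⌋₊ + 1)) :
      (i : ℝ) * β ≤ x := by
    have h1 : i ≤ ⌊x / β⌋₊ := Nat.lt_succ_iff.1 (Finset.mem_range.1 hi)
    exact (le_div_iff₀ hβ).1 ((Nat.le_floor_iff (div_nonneg hx hβ.le)).1 h1)
  rw [Vfun_eq, Vfun_eq]
  apply mul_lt_mul_of_pos_left _ hμ
  calc ∑ i ∈ Finset.range (⌊a / β⌋₊ + 1), gterm α β γ ν Δ i a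
      < ∑ i ∈ Finset.range (⌊a / β⌋₊ + 1), gterm α β γ ν Δ i b := by
        apply Finset.sum_lt_sum_of_nonempty (by simp)
        intro i hi
        exact hm i (hle ha hi) ((hle ha hi).trans hab.le) hab
    _ ≤ ∑ i ∈ Finset.range (⌊b / β⌋₊ + 1), gterm α β γ ν Δ i b := by
        apply Finset.sum_le_sum_of_subset_of_nonneg
        · apply Finset.range_mono
          have : ⌊a / β⌋₊ ≤ ⌊b / β⌋₊ := Nat.floor_mono (by gcongr)
          exact Nat.succ_le_succ this
        · intro i hi _
          have h0 : gterm α β γ ν Δ i ((i : ℝ) * β) = 0 := by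
            simp [gterm, Rres_zero]
          rw [← h0]
          exact (hm i).monotoneOn (Set.mem_Ici.2 le_rfl) (hle hb hi) (hle hb hi)
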